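/- Fix a positive integer k. Let G = (V,D,μ) be a multigraph with multiplicities and let G′ = (V,D,μ′) where μ′(d) = μ(d) mod 4k for each d ∈ D. Let κ be the number of connected components of the graph (V, {d ∈ D : μ(d) ≥ 1}) and κ′ the number of connected components of the graph (V, {d ∈ D : μ′(d) ≥ 1}) (isolated vertices count in both). Then, with x = −i cot(π/4k) and y = e^{iπ/2k}, T(G;x,y) = ( i e^{iπ/4k} sin(π/4k) )^{κ−κ′} · T(G′;x,y). -/

import Mathlib

/-!
By the Fortuin–Kasteleyn identity the Tutte polynomial is, off the lines `x = 1` and `y = 1`, a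
normalised random-cluster sum
`(x - 1) ^ κ(E) * (y - 1) ^ |V| * T(G; x, y) = ∑_A q ^ κ(A) * ∏_{e ∈ A} (y - 1)`
with `q = (x - 1) * (y - 1)`. In such a sum with arbitrary edge weights `w e`, a class of parallel
edges can be replaced by a single edge of weight `∏ (1 + w e) - 1`; for `m` parallel edges of weight
`y - 1` this is `y ^ m - 1`. So the right-hand side depends on the multiplicities only through the
powers `y ^ μ d`, and these do not change under reduction modulo `4k` because `y` is a `4k`-th root
of unity. The only discrepancy is the normalisation `(x - 1) ^ κ(E)`, and
`(x - 1)⁻¹ = i e^{iθ} sin θ` for `x = -i cot θ`.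
-/

open scoped Classical

noncomputable section

/-- A multigraph is encoded by a map `ε : E → Sym2 V` assigning to each edge index its
unordered pair of endpoints.  `graphOf ε A` is the simple graph on `V` whose edges are the
endpoint pairs of the edges in `A`. -/
def graphOf {V E : Type*} (ε : E → Sym2 V) (A : Set E) : SimpleGraph V :=
  SimpleGraph.fromEdgeSet (ε '' A)

/-- Number of connected components of the graph `(V, ε(A))` (isolated vertices count). -/
def kappa {V E : Type*} (ε : E → Sym2 V) (A : Set E) : ℕ :=
  Nat.card (graphOf ε A).ConnectedComponent

/-- Rank function `r(A) = |V| − κ(A)`. -/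
def rk {V E : Type*} (ε : E → Sym2 V) (A : Set E) : ℕ :=
  Nat.card V - kappa ε A

/-- Tutte polynomial of a multigraph, evaluated at `(x, y) ∈ ℂ²`:
`T(G;x,y) = Σ_{A ⊆ E} (x−1)^{r(E)−r(A)} (y−1)^{|A|−r(A)}`. -/
def tutte {V E : Type*} (ε : E → Sym2 V) (x y : ℂ) : ℂ :=
  ∑ᶠ A : Set E,
    (x - 1) ^ (rk ε Set.univ - rk ε A) * (y - 1) ^ (A.ncard - rk ε A)

/-- The edge index set of the multigraph determined by a multigraph with multiplicities
`(V, D, μ)`: one copy `Fin (μ d)` of each underlying pair `d ∈ D`. -/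
def multiE {V : Type*} (D : Finset (Sym2 V)) (μ : Sym2 V → ℕ) : Type _ :=
  Σ d : D, Fin (μ d.1)

/-- The endpoint map of the multigraph determined by `(V, D, μ)`. -/
def multiEps {V : Type*} (D : Finset (Sym2 V)) (μ : Sym2 V → ℕ) :
    multiE D μ → Sym2 V :=
  fun p => p.1.1

lemma card_le_card_edgeSet_add_card_connectedComponent {V : Type*} [Finite V]
    (G : SimpleGraph V) :
    Nat.card V ≤ Nat.card G.edgeSet + Nat.card G.ConnectedComponent := by
  have := Fintype.ofFinite G.ConnectedComponent
  let toEdge : (Σ C : G.ConnectedComponent, C.toSimpleGraph.edgeSet) → G.edgeSet := fun p =>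
    (SimpleGraph.Embedding.induce p.1.supp).toHom.mapEdgeSet p.2
  have toEdge_injective : Function.Injective toEdge := by
    rintro ⟨C, e, he⟩ ⟨C', e', he'⟩ h
    have hval : e.map Subtype.val = e'.map Subtype.val := congrArg Subtype.val h
    obtain rfl : C = C' := by
      induction e using Sym2.ind with | _ u w =>
      have hu : (u : V) ∈ e'.map Subtype.val := hval ▸ Sym2.mem_mk_left _ _
      obtain ⟨u', -, hu'⟩ := Sym2.mem_map.1 hu
      exact u.2.symm.trans ((congrArg _ hu'.symm).trans u'.2)
    obtain rfl := Sym2.map.injective Subtype.val_injective hval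
    rfl
  calc Nat.card V = ∑ C : G.ConnectedComponent, Nat.card C := by
        rw [← Nat.card_sigma]
        exact Nat.card_congr (Equiv.sigmaFiberEquiv G.connectedComponentMk).symm
    _ ≤ ∑ C : G.ConnectedComponent, (Nat.card C.toSimpleGraph.edgeSet + 1) :=
        Finset.sum_le_sum fun C _ => C.connected_toSimpleGraph.card_vert_le_card_edgeSet_add_one
    _ = Nat.card (Σ C : G.ConnectedComponent, C.toSimpleGraph.edgeSet) +
          Nat.card G.ConnectedComponent := by
        simp [Nat.card_sigma, Finset.sum_add_distrib]
    _ ≤ Nat.card G.edgeSet + Nat.card G.ConnectedComponent :=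
        Nat.add_le_add_right (Nat.card_le_card_of_injective toEdge toEdge_injective) _

section Rank

variable {V E : Type*} [Finite V] (ε : E → Sym2 V)

lemma kappa_add_rk (A : Set E) : kappa ε A + rk ε A = Nat.card V :=
  Nat.add_sub_cancel' (Nat.card_le_card_of_surjective _ Quot.mk_surjective)

lemma rk_mono : Monotone (rk ε) := fun _ _ hAB =>
  Nat.sub_le_sub_left (SimpleGraph.ConnectedComponent.card_le_card_of_le
    (SimpleGraph.fromEdgeSet_mono (Set.image_mono hAB))) _

lemma rk_le_ncard [Finite E] (A : Set E) : rk ε A ≤ A.ncard := by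
  have edgeSet_le : (graphOf ε A).edgeSet.ncard ≤ A.ncard := by
    rw [graphOf, SimpleGraph.edgeSet_fromEdgeSet]
    exact (Set.ncard_le_ncard Set.sdiff_subset (Set.toFinite _)).trans
      (Set.ncard_image_le A.toFinite)
  exact Nat.sub_le_iff_le_add.2 <|
    (card_le_card_edgeSet_add_card_connectedComponent (graphOf ε A)).trans
      (Nat.add_le_add_right edgeSet_le _)

end Rank

/-- The multivariate Tutte polynomial (random-cluster partition function)
`Z(G; q, w) = Σ_{A ⊆ E} q^{κ(A)} Π_{e ∈ A} w_e` of a multigraph with edge weights `w`. -/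
def multivariateTutte {V E R : Type*} [Fintype E] [CommSemiring R] (ε : E → Sym2 V) (q : R)
    (w : E → R) : R :=
  ∑ A : Finset E, q ^ kappa ε (A : Set E) * ∏ e ∈ A, w e

lemma pow_kappa_mul_pow_card_mul_tutte {V E : Type*} [Finite V] [Fintype E] (ε : E → Sym2 V)
    (x y : ℂ) :
    (x - 1) ^ kappa ε Set.univ * (y - 1) ^ Nat.card V * tutte ε x y =
      multivariateTutte ε ((x - 1) * (y - 1)) fun _ => y - 1 := by
  rw [tutte, ← finsum_comp_equiv Fintype.finsetEquivSet, finsum_eq_sum_of_fintype,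
    multivariateTutte, Finset.mul_sum]
  refine Finset.sum_congr rfl fun A _ => ?_
  rw [Fintype.finsetEquivSet_apply, Set.ncard_coe_finset, Finset.prod_const]
  have hA := kappa_add_rk ε (A : Set E)
  have huniv := kappa_add_rk ε Set.univ
  have hmono := rk_mono ε (Set.subset_univ (A : Set E))
  have hcard := rk_le_ncard ε (A : Set E)
  rw [Set.ncard_coe_finset] at hcard
  have hx : kappa ε (A : Set E) =
      kappa ε Set.univ + (rk ε Set.univ - rk ε (A : Set E)) := by omega
  have hy : kappa ε (A : Set E) + A.card = Nat.card V + (A.card - rk ε (A : Set E)) := by omega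
  calc _ = (x - 1) ^ (kappa ε Set.univ + (rk ε Set.univ - rk ε (A : Set E))) *
        (y - 1) ^ (Nat.card V + (A.card - rk ε (A : Set E))) := by ring
    _ = ((x - 1) * (y - 1)) ^ kappa ε (A : Set E) * (y - 1) ^ A.card := by
        rw [← hx, ← hy, pow_add, mul_pow, mul_assoc]

lemma eq_of_forall_sum_powerset_eq {ι M : Type*} [AddCommMonoid M] [IsCancelAdd M]
    {g h : Finset ι → M}
    (hgh : ∀ S : Finset ι, ∑ T ∈ S.powerset, g T = ∑ T ∈ S.powerset, h T) : g = h := by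
  funext S
  induction S using Finset.strongInduction with | H S ih =>
  have hssubsets : ∑ T ∈ S.ssubsets, g T = ∑ T ∈ S.ssubsets, h T :=
    Finset.sum_congr rfl fun T hT => ih T (Finset.mem_ssubsets.1 hT)
  have hS := hgh S
  rw [← Finset.sum_erase_add _ _ (Finset.mem_powerset_self S),
    ← Finset.sum_erase_add _ _ (Finset.mem_powerset_self S)] at hS
  exact add_left_cancel (hssubsets ▸ hS)

section Parallel

variable {V E ι R : Type*} [Fintype E] [DecidableEq ι] [CommRing R]

lemma sum_prod_filter_image_eq (f : E → ι) (w : E → R) (S : Finset ι) :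
    ∑ A : Finset E with A.image f = S, ∏ e ∈ A, w e =
      ∏ i ∈ S, (∏ e with f e = i, (1 + w e) - 1) := by
  -- Summed over all subsets of `S`, either side becomes the product of `1 + w e` over `f e ∈ S`.
  revert S
  refine congrFun (eq_of_forall_sum_powerset_eq fun S : Finset ι => ?_)
  calc ∑ T ∈ S.powerset, ∑ A : Finset E with A.image f = T, ∏ e ∈ A, w e
      = ∑ A : Finset E with A.image f ∈ S.powerset, ∏ e ∈ A, w e := by
        rw [Finset.sum_fiberwise_eq_sum_filter]
    _ = ∑ A ∈ (Finset.univ.filter fun e => f e ∈ S).powerset, ∏ e ∈ A, w e := by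
        congr 1
        ext A
        simp [Finset.subset_iff]
    _ = ∏ e with f e ∈ S, (1 + w e) := (Finset.prod_one_add _).symm
    _ = ∏ i ∈ S, ∏ e with f e = i, (1 + w e) := (Finset.prod_fiberwise_eq_prod_filter _ _ _ _).symm
    _ = ∏ i ∈ S, (1 + (∏ e with f e = i, (1 + w e) - 1)) := by simp only [add_sub_cancel]
    _ = ∑ T ∈ S.powerset, ∏ i ∈ T, (∏ e with f e = i, (1 + w e) - 1) := Finset.prod_one_add _

lemma multivariateTutte_comp [Fintype ι] (ε : ι → Sym2 V) (f : E → ι) (q : R) (w : E → R) :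
    multivariateTutte (ε ∘ f) q w =
      multivariateTutte ε q fun i => ∏ e with f e = i, (1 + w e) - 1 := by
  have kappa_comp (A : Finset E) : kappa (ε ∘ f) (A : Set E) = kappa ε (A.image f : Set ι) := by
    rw [kappa, kappa, graphOf, graphOf, Set.image_comp, Finset.coe_image]
  simp only [multivariateTutte, ← sum_prod_filter_image_eq, Finset.mul_sum, kappa_comp]
  rw [← Finset.sum_fiberwise Finset.univ (Finset.image f)]
  refine Finset.sum_congr rfl fun S _ => Finset.sum_congr rfl fun A hA => ?_
  rw [(Finset.mem_filter.1 hA).2]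

end Parallel

instance {V : Type*} (D : Finset (Sym2 V)) (μ : Sym2 V → ℕ) : Fintype (multiE D μ) :=
  inferInstanceAs (Fintype (Σ d : D, Fin (μ d.1)))

lemma multivariateTutte_multiEps {V R : Type*} [CommRing R] (D : Finset (Sym2 V))
    (μ : Sym2 V → ℕ) (q v : R) :
    multivariateTutte (multiEps D μ) q (fun _ => v) =
      multivariateTutte (Subtype.val : D → Sym2 V) q fun d => (1 + v) ^ μ d - 1 := by
  have card_copies (d : D) :
      (Finset.univ.filter fun e : Σ d : D, Fin (μ d) => e.1 = d).card = μ d := by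
    rw [← Fintype.card_subtype, Fintype.card_congr (Equiv.sigmaSubtype d), Fintype.card_fin]
  have hcomp := multivariateTutte_comp (Subtype.val : D → Sym2 V)
    (Sigma.fst : (Σ d : D, Fin (μ d)) → D) q fun _ => v
  simp only [Finset.prod_const, card_copies] at hcomp
  exact hcomp

section RootOfUnity

open Complex

lemma neg_I_mul_cot_sub_one {θ : ℂ} (hθ : sin θ ≠ 0) :
    -I * (cos θ / sin θ) - 1 = (I * exp (I * θ) * sin θ)⁻¹ := by
  refine eq_inv_of_mul_eq_one_left ?_
  rw [mul_comm I θ, exp_mul_I]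
  field_simp
  linear_combination (-cos θ ^ 2 - sin θ ^ 2 - I * cos θ * sin θ) * I_sq + sin_sq_add_cos_sq θ

lemma sin_pi_div_ne_zero {n : ℕ} (hn : 1 < n) : Real.sin (Real.pi / n) ≠ 0 := by
  have hn' : (1 : ℝ) < n := by exact_mod_cast hn
  exact (Real.sin_pos_of_pos_of_lt_pi (by positivity) (div_lt_self Real.pi_pos hn')).ne'

lemma isPrimitiveRoot_exp_I_mul_pi_div {k : ℕ} (hk : 0 < k) :
    IsPrimitiveRoot (exp (I * ((Real.pi : ℂ) / (2 * k)))) (4 * k) := by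
  convert isPrimitiveRoot_exp (4 * k) (by omega) using 2
  push_cast
  field_simp
  ring

end RootOfUnity

theorem statement12_general {V : Type*} [Finite V] (D : Finset (Sym2 V)) (μ μ' : Sym2 V → ℕ)
    {x y : ℂ} (hx : x ≠ 1) (hy : y ≠ 1) (hpow : ∀ d ∈ D, y ^ μ d = y ^ μ' d) :
    tutte (multiEps D μ) x y =
      (x - 1) ^ ((kappa (multiEps D μ') Set.univ : ℤ) - (kappa (multiEps D μ) Set.univ : ℤ)) *
        tutte (multiEps D μ') x y := by
  have hx' : x - 1 ≠ 0 := sub_ne_zero.2 hx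
  have hV : (y - 1) ^ Nat.card V ≠ 0 := pow_ne_zero _ (sub_ne_zero.2 hy)
  have hweight : (fun d : D => y ^ μ d - 1) = fun d : D => y ^ μ' d - 1 :=
    funext fun d => by rw [hpow d d.2]
  have hnormalised :
      (x - 1) ^ kappa (multiEps D μ) Set.univ * (y - 1) ^ Nat.card V * tutte (multiEps D μ) x y =
        (x - 1) ^ kappa (multiEps D μ') Set.univ * (y - 1) ^ Nat.card V *
          tutte (multiEps D μ') x y := by
    simp only [pow_kappa_mul_pow_card_mul_tutte, multivariateTutte_multiEps, add_sub_cancel,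
      hweight]
  rw [zpow_sub₀ hx', zpow_natCast, zpow_natCast]
  field_simp
  exact mul_right_cancel₀ hV (by linear_combination hnormalised)

/-- Reducing all multiplicities modulo `4k` changes the Tutte polynomial at
`x = −i cot(π/4k)`, `y = e^{iπ/2k}` by the factor `(i e^{iπ/4k} sin(π/4k))^{κ−κ′}`, where `κ`
and `κ′` are the numbers of connected components of `G` and of the reduced graph `G′`. -/
theorem statement12 {V : Type*} [Finite V] (k : ℕ) (hk : 0 < k)
    (D : Finset (Sym2 V)) (μ : Sym2 V → ℕ) (x y : ℂ)
    (hx : x = -Complex.I *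
      ((Real.cos (Real.pi / (4 * k)) : ℂ) / (Real.sin (Real.pi / (4 * k)) : ℂ)))
    (hy : y = Complex.exp (Complex.I * ((Real.pi : ℂ) / (2 * k)))) :
    tutte (multiEps D μ) x y =
      (Complex.I * Complex.exp (Complex.I * ((Real.pi : ℂ) / (4 * k))) *
            (Real.sin (Real.pi / (4 * k)) : ℂ)) ^
          ((kappa (multiEps D μ) Set.univ : ℤ) -
            (kappa (multiEps D (fun d => μ d % (4 * k))) Set.univ : ℤ)) *
        tutte (multiEps D (fun d => μ d % (4 * k))) x y := by
  have hroot : IsPrimitiveRoot y (4 * k) := hy ▸ isPrimitiveRoot_exp_I_mul_pi_div hk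
  have hsin : Complex.sin (Real.pi / (4 * k)) ≠ 0 := by
    exact_mod_cast sin_pi_div_ne_zero (n := 4 * k) (by omega)
  push_cast at hx ⊢
  have hx_inv : x - 1 = (Complex.I * Complex.exp (Complex.I * (Real.pi / (4 * k))) *
      Complex.sin (Real.pi / (4 * k)))⁻¹ := hx ▸ neg_I_mul_cot_sub_one hsin
  have hx_ne : x ≠ 1 := by
    rw [← sub_ne_zero, hx_inv]
    simp [hsin]
  rw [statement12_general D μ _ hx_ne (hroot.ne_one (by omega))
    fun d _ => pow_eq_pow_mod (μ d) hroot.pow_eq_one, hx_inv, inv_zpow', neg_sub]
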